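/- arXiv:1509.06690 — 3 statements merged into one kernel-verified Lean document; each statement's English description precedes it below -/
import Mathlib

section
/- Let w : ℝ → ℝ³ be a twice continuously differentiable curve such that det[w(t), w'(t), w''(t)] = 0 for all t and the cross product w(t) × w'(t) is nonzero for all t. Then the curve lies in the plane through the origin spanned by its initial position and velocity: w(t) ∈ span{w(0), w'(0)} for all t ∈ ℝ. -/
/-!
Let `n = w × w'`, so that `n' = w × w''`. Since `(w × w') × (w × w'') = det[w, w', w''] w = 0`,
the vectors `n` and `n'` are parallel, and hence the orthogonal projector `n nᵀ / (n ⬝ n)` onto the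
line of `n` has zero derivative (`projector_const_of_cross_eq_zero`). The line `ℝ n(t)` is
therefore constant, and `w(t)`, being orthogonal to `n(t)`, is orthogonal to `n(0) = w(0) × w'(0)`,
which places it in `span{w(0), w'(0)}` (`mem_span_pair_of_dot_cross_eq_zero`).
-/

/-- A nowhere vanishing curve in `ℝ³` whose velocity is parallel to its position moves on a fixed
line. The line is encoded by its orthogonal projector, which, unlike a unit vector, is a rational
function of the position. -/
lemma projector_const_of_cross_eq_zero (n n' : ℝ → Fin 3 → ℝ)
    (hn : ∀ t, HasDerivAt n (n' t) t) (h0 : ∀ t, n t ≠ 0)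
    (hpar : ∀ t, crossProduct (n t) (n' t) = 0) (i j : Fin 3) (s t : ℝ) :
    n s i * n s j / (n s ⬝ᵥ n s) = n t i * n t j / (n t ⬝ᵥ n t) := by
  have hN : ∀ t, n t ⬝ᵥ n t ≠ 0 := fun t h => h0 t (dotProduct_self_eq_zero.mp h)
  have hc : ∀ t k, HasDerivAt (fun t => n t k) (n' t k) t := fun t => hasDerivAt_pi.mp (hn t)
  have hNd : ∀ t, HasDerivAt (fun t => n t ⬝ᵥ n t) (2 * (n t ⬝ᵥ n' t)) t := by
    intro t
    simp only [dotProduct, Fin.sum_univ_three]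
    refine ((((hc t 0).mul (hc t 0)).add ((hc t 1).mul (hc t 1))).add
      ((hc t 2).mul (hc t 2))).congr_deriv ?_
    ring
  have hswap : ∀ t (k l : Fin 3), n t k * n' t l = n t l * n' t k := by
    intro t k l
    have h := hpar t
    rw [cross_apply] at h
    have e0 := congrFun h 0
    have e1 := congrFun h 1
    have e2 := congrFun h 2
    simp at e0 e1 e2
    fin_cases k <;> fin_cases l <;> simp <;> linarith
  have hd : ∀ t, HasDerivAt (fun t => n t i * n t j / (n t ⬝ᵥ n t)) 0 t := by
    intro t
    refine (((hc t i).mul (hc t j)).div (hNd t) (hN t)).congr_deriv ?_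
    rw [div_eq_zero_iff]
    left
    simp only [dotProduct, Fin.sum_univ_three, Pi.mul_apply]
    linear_combination
      (-n t j) * (n t 0 * hswap t i 0 + n t 1 * hswap t i 1 + n t 2 * hswap t i 2)
      - n t i * (n t 0 * hswap t j 0 + n t 1 * hswap t j 1 + n t 2 * hswap t j 2)
  exact is_const_of_deriv_eq_zero (fun t => (hd t).differentiableAt) (fun t => (hd t).deriv) s t

lemma mem_span_pair_of_dot_cross_eq_zero (a b x : Fin 3 → ℝ) (h0 : crossProduct a b ≠ 0)
    (hx : x ⬝ᵥ crossProduct a b = 0) : x ∈ Submodule.span ℝ ({a, b} : Set (Fin 3 → ℝ)) := by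
  have hN : crossProduct a b ⬝ᵥ crossProduct a b ≠ 0 :=
    fun h => h0 (dotProduct_self_eq_zero.mp h)
  rw [Submodule.mem_span_pair]
  -- Cramer's rule for `x` in the basis `a, b, a × b`.
  refine ⟨(x ⬝ᵥ crossProduct b (crossProduct a b)) / (crossProduct a b ⬝ᵥ crossProduct a b),
    (x ⬝ᵥ crossProduct (crossProduct a b) a) / (crossProduct a b ⬝ᵥ crossProduct a b), ?_⟩
  have key : (x ⬝ᵥ crossProduct b (crossProduct a b)) • a
      + (x ⬝ᵥ crossProduct (crossProduct a b) a) • b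
      + (x ⬝ᵥ crossProduct a b) • crossProduct a b
      = (crossProduct a b ⬝ᵥ crossProduct a b) • x := by
    ext k
    fin_cases k <;> simp [cross_apply, dotProduct, Fin.sum_univ_three] <;> ring
  rw [hx, zero_smul, add_zero] at key
  rw [div_eq_inv_mul, div_eq_inv_mul, mul_smul, mul_smul, ← smul_add, key, inv_smul_smul₀ hN]

/-- A totally degenerate curve lies in the plane through the origin spanned by
its initial position and velocity: if `w : ℝ → ℝ³` is `C²`, `det[w, w', w''] ≡ 0`,
and `w × w'` never vanishes, then `w(t) ∈ span{w(0), w'(0)}` for all `t`. -/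
theorem totally_degenerate_curve_planar
    (w : ℝ → (Fin 3 → ℝ)) (hw : ContDiff ℝ 2 w)
    (hdeg : ∀ t : ℝ,
      Matrix.det (Matrix.of ![w t, deriv w t, iteratedDeriv 2 w t]) = 0)
    (hcross : ∀ t : ℝ, crossProduct (w t) (deriv w t) ≠ 0) :
    ∀ t : ℝ, w t ∈ Submodule.span ℝ ({w 0, deriv w 0} : Set (Fin 3 → ℝ)) := by
  intro t
  have h1 : ∀ t, HasDerivAt w (deriv w t) t := fun t =>
    (hw.differentiable (by norm_num) t).hasDerivAt
  have h2 : ∀ t, HasDerivAt (deriv w) (iteratedDeriv 2 w t) t := by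
    intro t
    have hd : Differentiable ℝ (iteratedDeriv 1 w) :=
      hw.differentiable_iteratedDeriv 1 (by norm_num)
    rw [iteratedDeriv_succ, iteratedDeriv_one]
    rw [iteratedDeriv_one] at hd
    exact (hd t).hasDerivAt
  have hn : ∀ t, HasDerivAt (fun t => crossProduct (w t) (deriv w t))
      (crossProduct (w t) (iteratedDeriv 2 w t)) t := by
    intro t
    have c1 := hasDerivAt_pi.mp (h1 t)
    have c2 := hasDerivAt_pi.mp (h2 t)
    have m : ∀ i j : Fin 3, HasDerivAt (fun t => w t i * deriv w t j - w t j * deriv w t i)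
        (w t i * iteratedDeriv 2 w t j - w t j * iteratedDeriv 2 w t i) t := by
      intro i j
      refine (((c1 i).mul (c2 j)).sub ((c1 j).mul (c2 i))).congr_deriv ?_
      ring
    rw [hasDerivAt_pi]
    intro k
    simp only [cross_apply]
    fin_cases k
    · exact m 1 2
    · exact m 2 0
    · exact m 0 1
  have hpar : ∀ t, crossProduct (crossProduct (w t) (deriv w t))
      (crossProduct (w t) (iteratedDeriv 2 w t)) = 0 := by
    intro t
    have hdet := hdeg t
    rw [Matrix.det_fin_three] at hdet
    simp at hdet
    ext k
    fin_cases k <;> simp [cross_apply]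
    · linear_combination w t 0 * hdet
    · linear_combination w t 1 * hdet
    · linear_combination w t 2 * hdet
  have hP := fun i j => projector_const_of_cross_eq_zero _ _ hn hcross hpar i j 0 t
  apply mem_span_pair_of_dot_cross_eq_zero _ _ _ (hcross 0)
  have hperp := dot_self_cross (w t) (deriv w t)
  have hm := hcross 0
  beta_reduce at hP
  generalize crossProduct (w 0) (deriv w 0) = m at hP hm ⊢
  generalize crossProduct (w t) (deriv w t) = n at hP hperp
  have hN : m ⬝ᵥ m ≠ 0 := fun h => hm (dotProduct_self_eq_zero.mp h)
  obtain ⟨j, hj⟩ := Function.ne_iff.mp hm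
  -- The projectors onto `ℝ m` and `ℝ n` agree, and the latter kills `w t`.
  have hz : (w t ⬝ᵥ m) * (m j / (m ⬝ᵥ m)) = (w t ⬝ᵥ n) * (n j / (n ⬝ᵥ n)) := by
    simp only [dotProduct, Fin.sum_univ_three] at hP ⊢
    linear_combination w t 0 * hP 0 j + w t 1 * hP 1 j + w t 2 * hP 2 j
  rw [hperp, zero_mul] at hz
  exact (mul_eq_zero.mp hz).resolve_right (div_ne_zero hj hN)
end

section
/- Let y, z : ℝ → ℝ be twice continuously differentiable, and fix x ∈ ℝ such that z(x) ≠ 0 and z(x) − x·z'(x) ≠ 0. Define the projected plane curve coordinates X(x) = x/z(x) and Y(x) = y(x)/z(x), and let Δ(x) = det[(x, y(x), z(x)), (1, y'(x), z'(x)), (0, y''(x), z''(x))]. Then the second derivative of the projected curve satisfies (1/X'(x)) · d/dx ( Y'(x)/X'(x) ) = − z(x)³ · Δ(x) / (x·z'(x) − z(x))³. -/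
/-!
Wherever `z ≠ 0`, the quotient rule gives `X' = (z - t z') / z²` and `Y' = (y' z - y z') / z²`, so
near `x` the slope `Y' / X'` equals `(y' z - y z') / (z - t z')`. In the derivatives of numerator and
denominator the first-order terms cancel, leaving `y'' z - y z''` and `-t z''`; one more quotient
rule and the expansion of the determinant give the formula.
-/

/-- For a space curve `(x, y(x), z(x))` with `z(x) ≠ 0` and `z(x) − x z'(x) ≠ 0`,
the second derivative `Y₂ = (1/X') d/dx (Y'/X')` of its central projection
`(X, Y) = (x/z, y/z)` is given by `−z³ Δ / (x z' − z)³`, where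
`Δ = det[(x, y, z), (1, y', z'), (0, y'', z'')]`. -/
theorem projected_second_derivative
    (y z : ℝ → ℝ) (hy : ContDiff ℝ 2 y) (hz : ContDiff ℝ 2 z)
    (x : ℝ) (h1 : z x ≠ 0) (h2 : z x - x * deriv z x ≠ 0) :
    (1 / deriv (fun t => t / z t) x) *
        deriv (fun t => deriv (fun s => y s / z s) t / deriv (fun s => s / z s) t) x
      = - (z x) ^ 3 *
          Matrix.det !![x, y x, z x; 1, deriv y x, deriv z x;
            0, iteratedDeriv 2 y x, iteratedDeriv 2 z x] /
          (x * deriv z x - z x) ^ 3 := by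
  have dy : Differentiable ℝ y := hy.differentiable (by norm_num)
  have dz : Differentiable ℝ z := hz.differentiable (by norm_num)
  have hy' : HasDerivAt (deriv y) (iteratedDeriv 2 y x) x := by
    rw [iteratedDeriv_succ, iteratedDeriv_one]
    exact (hy.differentiable_deriv_two x).hasDerivAt
  have hz' : HasDerivAt (deriv z) (iteratedDeriv 2 z x) x := by
    rw [iteratedDeriv_succ, iteratedDeriv_one]
    exact (hz.differentiable_deriv_two x).hasDerivAt
  have hX : ∀ t, z t ≠ 0 →
      deriv (fun s => s / z s) t = (z t - t * deriv z t) / z t ^ 2 := fun t ht => by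
    simpa using ((hasDerivAt_id' t).fun_div (dz t).hasDerivAt ht).deriv
  have hY : ∀ t, z t ≠ 0 →
      deriv (fun s => y s / z s) t = (deriv y t * z t - y t * deriv z t) / z t ^ 2 :=
    fun t ht => ((dy t).hasDerivAt.div (dz t).hasDerivAt ht).deriv
  have hslope : (fun t => deriv (fun s => y s / z s) t / deriv (fun s => s / z s) t) =ᶠ[nhds x]
      fun t => (deriv y t * z t - y t * deriv z t) / (z t - t * deriv z t) := by
    filter_upwards [dz.continuous.continuousAt.eventually_ne h1] with t ht
    rw [hX t ht, hY t ht, div_div_div_cancel_right₀ (pow_ne_zero 2 ht)]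
  have hN : HasDerivAt (fun t => deriv y t * z t - y t * deriv z t)
      (iteratedDeriv 2 y x * z x - y x * iteratedDeriv 2 z x) x := by
    refine ((hy'.fun_mul (dz x).hasDerivAt).fun_sub ((dy x).hasDerivAt.fun_mul hz')).congr_deriv ?_
    ring
  have hD : HasDerivAt (fun t => z t - t * deriv z t) (-(x * iteratedDeriv 2 z x)) x := by
    refine ((dz x).hasDerivAt.fun_sub ((hasDerivAt_id' x).fun_mul hz')).congr_deriv ?_
    ring
  have h3 : x * deriv z x - z x = -(z x - x * deriv z x) := by ring
  rw [hslope.deriv_eq, (hN.fun_div hD h2).deriv, hX x h1, Matrix.det_fin_three, h3]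
  simp only [Matrix.of_apply, Matrix.cons_val]
  field_simp
  ring
end

section
/- Consider the twisted cubic w(t) = (t, t², t³) for t > 0. Let Δ(t) = det[w(t), w'(t), w''(t)], and define the centro-equi-affine curvature κ(t) = −(1/2)·(d²/dt²)(Δ(t)^{−2/3}) + det[w(t), w''(t), w'''(t)]/Δ(t)^{5/3} and torsion τ(t) = det[w'(t), w''(t), w'''(t)]/Δ(t)². Then κ(t) > 0, and the centro-affine curvature and torsion invariants are constant: with κ_s(t) = Δ(t)^{−1/3}·κ'(t), one has κ_s(t)/κ(t)^{3/2} = −4/√3 and τ(t)/κ(t)^{3/2} = 2/√3 for all t > 0. In particular κ_s(t) + 2·τ(t) = 0, so the centro-affine invariant α̂ = (κ_s + 2τ)/κ^{3/2} vanishes identically on the twisted cubic. -/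
/-!
Everything reduces to monomials in `t`. Differentiating the cubic coordinatewise gives
`Δ = 2t³`, `det[w, w'', w'''] = 12t` and `det[w', w'', w'''] = 12`. With `c = 2^{-1/3}`, so that
`c³ = 1/2`, the fractional powers for `t > 0` are `Δ^{-1/3} = c/t`, `Δ^{-2/3} = c²/t²` and
`Δ^{5/3} = 4ct⁵`. Hence `κ = 3c²/t⁴ > 0`, `κ_s = -6/t⁶`, `τ = 3/t⁶` and `κ^{3/2} = 3√3/(2t⁶)`,
from which the four claims are read off.
-/

/-- The twisted cubic `w(t) = (t, t², t³)`. -/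
noncomputable def twistedCubic (t : ℝ) : Fin 3 → ℝ := ![t, t ^ 2, t ^ 3]

/-- The centro-equi-affine determinant `Δ = det[w, w', w'']` of the twisted cubic. -/
noncomputable def twistedDelta (t : ℝ) : ℝ :=
  Matrix.det (Matrix.of
    ![twistedCubic t, deriv twistedCubic t, iteratedDeriv 2 twistedCubic t])

/-- The centro-equi-affine curvature
`κ = −(1/2) D_t²(Δ^{−2/3}) + det[w, w'', w''']/Δ^{5/3}` of the twisted cubic. -/
noncomputable def twistedKappa (t : ℝ) : ℝ :=
  -(1 / 2) * iteratedDeriv 2 (fun s => (twistedDelta s) ^ (-(2 : ℝ) / 3)) t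
    + Matrix.det (Matrix.of
        ![twistedCubic t, iteratedDeriv 2 twistedCubic t, iteratedDeriv 3 twistedCubic t]) /
      (twistedDelta t) ^ ((5 : ℝ) / 3)

/-- The centro-equi-affine torsion `τ = det[w', w'', w''']/Δ²` of the twisted cubic. -/
noncomputable def twistedTau (t : ℝ) : ℝ :=
  Matrix.det (Matrix.of
    ![deriv twistedCubic t, iteratedDeriv 2 twistedCubic t, iteratedDeriv 3 twistedCubic t]) /
    (twistedDelta t) ^ 2

lemma deriv_twistedCubic : deriv twistedCubic = fun t => ![1, 2 * t, 3 * t ^ 2] := by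
  funext t
  refine HasDerivAt.deriv (hasDerivAt_pi.2 fun i => ?_)
  fin_cases i
  · simpa [twistedCubic] using hasDerivAt_id' t
  · simpa [twistedCubic] using hasDerivAt_pow 2 t
  · simpa [twistedCubic] using hasDerivAt_pow 3 t

lemma iteratedDeriv_two_twistedCubic :
    iteratedDeriv 2 twistedCubic = fun t => ![0, 2, 6 * t] := by
  rw [iteratedDeriv_succ, iteratedDeriv_one, deriv_twistedCubic]
  funext t
  refine HasDerivAt.deriv (hasDerivAt_pi.2 fun i => ?_)
  fin_cases i
  · simpa using hasDerivAt_const t (1 : ℝ)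
  · simpa using (hasDerivAt_id' t).const_mul (2 : ℝ)
  · have h := (hasDerivAt_pow 2 t).const_mul (3 : ℝ)
    have e : (3 : ℝ) * (((2 : ℕ) : ℝ) * t ^ (2 - 1)) = 6 * t := by
      norm_num
      ring
    rw [e] at h
    exact h

lemma iteratedDeriv_three_twistedCubic :
    iteratedDeriv 3 twistedCubic = fun _ => ![0, 0, 6] := by
  rw [iteratedDeriv_succ, iteratedDeriv_two_twistedCubic]
  funext t
  refine HasDerivAt.deriv (hasDerivAt_pi.2 fun i => ?_)
  fin_cases i
  · simpa using hasDerivAt_const t (0 : ℝ)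
  · simpa using hasDerivAt_const t (2 : ℝ)
  · simpa using (hasDerivAt_id' t).const_mul (6 : ℝ)

lemma twistedDelta_eq (t : ℝ) : twistedDelta t = 2 * t ^ 3 := by
  simp [twistedDelta, deriv_twistedCubic, iteratedDeriv_two_twistedCubic, twistedCubic,
    Matrix.det_fin_three]
  ring

lemma twistedTau_eq {t : ℝ} (ht : 0 < t) : twistedTau t = 3 / t ^ 6 := by
  simp [twistedTau, twistedDelta_eq, deriv_twistedCubic, iteratedDeriv_two_twistedCubic,
    iteratedDeriv_three_twistedCubic, Matrix.det_fin_three]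
  field_simp
  norm_num

/-- The constant `2^{-1/3}`, the cube root of `1/2`. -/
noncomputable def cubeRootHalf : ℝ := (2 : ℝ) ^ (-(1 : ℝ) / 3)

lemma cubeRootHalf_pos : 0 < cubeRootHalf := by
  unfold cubeRootHalf
  positivity

lemma cubeRootHalf_cube : cubeRootHalf ^ 3 = 1 / 2 := by
  rw [cubeRootHalf, ← Real.rpow_natCast, ← Real.rpow_mul (by norm_num)]
  norm_num [Real.rpow_neg_one]

lemma twistedDelta_rpow_neg_third {t : ℝ} (ht : 0 < t) :
    twistedDelta t ^ (-(1 : ℝ) / 3) = cubeRootHalf / t := by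
  rw [twistedDelta_eq, Real.mul_rpow (by norm_num) (by positivity), ← Real.rpow_natCast t 3,
    ← Real.rpow_mul ht.le, cubeRootHalf, div_eq_mul_inv _ t, ← Real.rpow_neg_one t]
  norm_num

lemma twistedDelta_rpow_neg_two_thirds {t : ℝ} (ht : 0 < t) :
    twistedDelta t ^ (-(2 : ℝ) / 3) = cubeRootHalf ^ 2 * t ^ (-2 : ℤ) := by
  have hD : 0 < twistedDelta t := by rw [twistedDelta_eq]; positivity
  have h : twistedDelta t ^ (-(2 : ℝ) / 3) = (twistedDelta t ^ (-(1 : ℝ) / 3)) ^ 2 := by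
    rw [← Real.rpow_natCast, ← Real.rpow_mul hD.le]
    norm_num
  rw [h, twistedDelta_rpow_neg_third ht, div_pow, zpow_neg, div_eq_mul_inv]
  norm_cast

lemma twistedDelta_rpow_five_thirds {t : ℝ} (ht : 0 < t) :
    twistedDelta t ^ ((5 : ℝ) / 3) = 4 * cubeRootHalf * t ^ 5 := by
  have hD : 0 < twistedDelta t := by rw [twistedDelta_eq]; positivity
  have h : twistedDelta t ^ ((5 : ℝ) / 3)
      = twistedDelta t ^ 2 * twistedDelta t ^ (-(1 : ℝ) / 3) := by
    rw [← Real.rpow_natCast, ← Real.rpow_add hD]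
    norm_num
  rw [h, twistedDelta_rpow_neg_third ht, twistedDelta_eq]
  field_simp
  ring

lemma iteratedDeriv_two_twistedDelta_rpow {t : ℝ} (ht : 0 < t) :
    iteratedDeriv 2 (fun s => twistedDelta s ^ (-(2 : ℝ) / 3)) t
      = 6 * cubeRootHalf ^ 2 / t ^ 4 := by
  -- The monomial form of `Δ^{-2/3}` holds only for positive arguments, hence near `t`.
  have h : (fun s => twistedDelta s ^ (-(2 : ℝ) / 3))
      =ᶠ[nhds t] fun s => cubeRootHalf ^ 2 * s ^ (-2 : ℤ) := by
    filter_upwards [lt_mem_nhds ht] with s hs using twistedDelta_rpow_neg_two_thirds hs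
  rw [h.iteratedDeriv_eq, iteratedDeriv_succ, iteratedDeriv_one]
  simp only [deriv_const_mul_field', deriv_const_mul_field, deriv_zpow]
  norm_num [zpow_neg]
  norm_cast
  ring

lemma twistedKappa_eq {t : ℝ} (ht : 0 < t) :
    twistedKappa t = 3 * cubeRootHalf ^ 2 * t ^ (-4 : ℤ) := by
  have hc := cubeRootHalf_pos
  have hc3 := cubeRootHalf_cube
  have hdet : Matrix.det (Matrix.of ![twistedCubic t, iteratedDeriv 2 twistedCubic t,
      iteratedDeriv 3 twistedCubic t]) = 12 * t := by
    simp [iteratedDeriv_two_twistedCubic, iteratedDeriv_three_twistedCubic, twistedCubic,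
      Matrix.det_fin_three]
    ring
  have hz : t ^ (-4 : ℤ) = 1 / t ^ 4 := by
    rw [zpow_neg, one_div]
    norm_cast
  rw [twistedKappa, iteratedDeriv_two_twistedDelta_rpow ht, hdet,
    twistedDelta_rpow_five_thirds ht, hz]
  field_simp
  linear_combination (-48) * hc3

lemma deriv_twistedKappa {t : ℝ} (ht : 0 < t) :
    deriv twistedKappa t = -12 * cubeRootHalf ^ 2 / t ^ 5 := by
  have h : twistedKappa =ᶠ[nhds t] fun s => 3 * cubeRootHalf ^ 2 * s ^ (-4 : ℤ) := by
    filter_upwards [lt_mem_nhds ht] with s hs using twistedKappa_eq hs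
  rw [h.deriv_eq]
  simp only [deriv_const_mul_field, deriv_zpow]
  norm_num [zpow_neg]
  norm_cast
  ring

lemma twistedKappa_rpow {t : ℝ} (ht : 0 < t) :
    twistedKappa t ^ ((3 : ℝ) / 2) = 3 * Real.sqrt 3 / (2 * t ^ 6) := by
  have hc := cubeRootHalf_pos
  have h3 : Real.sqrt 3 ^ 2 = 3 := Real.sq_sqrt (by norm_num)
  -- `κ` is the square of `√3 c / t²`, so `κ^{3/2}` is its cube.
  have hsq : twistedKappa t = (Real.sqrt 3 * cubeRootHalf / t ^ 2) ^ (2 : ℝ) := by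
    rw [twistedKappa_eq ht, Real.rpow_two, div_pow, mul_pow, h3, zpow_neg, ← pow_mul,
      div_eq_mul_inv]
    norm_cast
  have hcube : (Real.sqrt 3 * cubeRootHalf / t ^ 2) ^ 3 = 3 * Real.sqrt 3 / (2 * t ^ 6) := by
    rw [div_pow, mul_pow, cubeRootHalf_cube, pow_succ, h3]
    field_simp
  rw [hsq, ← Real.rpow_mul (by positivity), ← hcube, ← Real.rpow_natCast _ 3]
  norm_num

lemma twistedKappa_arcDeriv {t : ℝ} (ht : 0 < t) :
    twistedDelta t ^ (-(1 : ℝ) / 3) * deriv twistedKappa t = -6 / t ^ 6 := by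
  rw [twistedDelta_rpow_neg_third ht, deriv_twistedKappa ht]
  field_simp
  linear_combination (-12) * cubeRootHalf_cube

/-- On the twisted cubic (for `t > 0`): `κ > 0`, the centro-affine curvature
`κ_s/κ^{3/2}` (with `κ_s = Δ^{−1/3} κ'`) equals `−4/√3`, the centro-affine
torsion `τ/κ^{3/2}` equals `2/√3`, and consequently `κ_s + 2τ = 0`, i.e., the
invariant `α̂ = (κ_s + 2τ)/κ^{3/2}` vanishes identically. -/
theorem twisted_cubic_centro_affine_invariants :
    ∀ t : ℝ, 0 < t →
      0 < twistedKappa t ∧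
      ((twistedDelta t) ^ (-(1 : ℝ) / 3) * deriv twistedKappa t) /
          (twistedKappa t) ^ ((3 : ℝ) / 2) = -4 / Real.sqrt 3 ∧
      twistedTau t / (twistedKappa t) ^ ((3 : ℝ) / 2) = 2 / Real.sqrt 3 ∧
      (twistedDelta t) ^ (-(1 : ℝ) / 3) * deriv twistedKappa t
          + 2 * twistedTau t = 0 := by
  intro t ht
  have hc := cubeRootHalf_pos
  rw [twistedKappa_arcDeriv ht, twistedKappa_rpow ht, twistedTau_eq ht]
  refine ⟨by rw [twistedKappa_eq ht]; positivity, ?_, ?_, ?_⟩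
  · field_simp
    norm_num
  · field_simp
  · ring
end
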